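/- There exist constants C > 0 and r₀ > 0 such that for all r ≥ r₀ one has ‖v′(r) + (2/r)Mc(r) − (4/r²){ s(r)·ᵗs(r)·s(r) + A M c(r) + H(r) M c(r) }‖ ≤ C r⁻³, where M = Diag(μ₁, …, μₙ), v′ is the derivative of v, and ‖·‖ is the norm on ℂⁿ. -/

import Mathlib

open Matrix MeasureTheory

/-- A left inverse of `t⁻¹ + K`, written as a perturbation of `t`. -/
theorem leftInverse_eq_smul_one_sub {R : Type*} [Ring R] [Algebra ℂ R] {P K : R} {t : ℂ}
    (ht : t ≠ 0) (hP : P * (t⁻¹ • 1 + K) = 1) : P = t • 1 - t • (P * K) := by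
  have h : t⁻¹ • P = 1 - P * K := by
    rw [← hP, mul_add, mul_smul_comm, mul_one, add_sub_cancel_right]
  rw [← smul_sub, ← h, smul_inv_smul₀ ht]

section Resolvent

variable {R : Type*} [NormedRing R] [NormOneClass R] [NormedAlgebra ℂ R] {P K : R} {t : ℂ} {k : ℝ}

theorem norm_leftInverse_le (ht : t ≠ 0) (hP : P * (t⁻¹ • 1 + K) = 1) (hK : ‖K‖ ≤ k)
    (hk : ‖t‖ * k ≤ 1 / 2) : ‖P‖ ≤ 2 * ‖t‖ := by
  have h1 : ‖P‖ ≤ ‖t‖ + ‖t‖ * (‖P‖ * k) := by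
    calc ‖P‖ = ‖t • (1 : R) - t • (P * K)‖ := by
          rw [← leftInverse_eq_smul_one_sub ht hP]
      _ ≤ ‖t • (1 : R)‖ + ‖t • (P * K)‖ := norm_sub_le _ _
      _ ≤ ‖t‖ + ‖t‖ * (‖P‖ * k) := by
          rw [norm_smul, norm_smul, norm_one, mul_one]
          gcongr
          exact (norm_mul_le _ _).trans (by gcongr)
  nlinarith [norm_nonneg P]

theorem norm_leftInverse_sub_smul_one_le (ht : t ≠ 0) (hP : P * (t⁻¹ • 1 + K) = 1)
    (hK : ‖K‖ ≤ k) (hk : ‖t‖ * k ≤ 1 / 2) : ‖P - t • 1‖ ≤ 2 * ‖t‖ ^ 2 * k := by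
  have h : P - t • 1 = -(t • (P * K)) := by
    conv_lhs => rw [leftInverse_eq_smul_one_sub ht hP]
    abel
  rw [h, norm_neg, norm_smul]
  calc ‖t‖ * ‖P * K‖ ≤ ‖t‖ * ((2 * ‖t‖) * k) := by
        gcongr
        exact (norm_mul_le _ _).trans (mul_le_mul (norm_leftInverse_le ht hP hK hk) hK
          (norm_nonneg _) (by positivity))
    _ = 2 * ‖t‖ ^ 2 * k := by ring

theorem norm_leftInverse_sub_add_le (ht : t ≠ 0) (hP : P * (t⁻¹ • 1 + K) = 1)
    (hK : ‖K‖ ≤ k) (hk : ‖t‖ * k ≤ 1 / 2) :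
    ‖P - t • 1 + t ^ 2 • K‖ ≤ 2 * ‖t‖ ^ 3 * k ^ 2 := by
  have h : P - t • 1 + t ^ 2 • K = -(t • ((P - t • 1) * K)) := by
    rw [sub_mul, smul_mul_assoc, one_mul, smul_sub, smul_smul, ← sq]
    conv_lhs => rw [leftInverse_eq_smul_one_sub ht hP]
    abel
  have hk0 : 0 ≤ k := (norm_nonneg _).trans hK
  rw [h, norm_neg, norm_smul]
  calc ‖t‖ * ‖(P - t • 1) * K‖ ≤ ‖t‖ * ((2 * ‖t‖ ^ 2 * k) * k) := by
        gcongr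
        exact (norm_mul_le _ _).trans (mul_le_mul (norm_leftInverse_sub_smul_one_le ht hP hK hk) hK
          (norm_nonneg _) (by positivity))
    _ = 2 * ‖t‖ ^ 3 * k ^ 2 := by ring

theorem norm_leftInverse_mul_mul_sub_le (ht : t ≠ 0) (hP : P * (t⁻¹ • 1 + K) = 1)
    (hK : ‖K‖ ≤ k) (hk : ‖t‖ * k ≤ 1 / 2) (W : R) :
    ‖P * W * P - t ^ 2 • W‖ ≤ 6 * ‖t‖ ^ 3 * k * ‖W‖ := by
  have h : P * W * P - t ^ 2 • W = (P - t • 1) * W * P + t • (W * (P - t • 1)) := by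
    simp only [sub_mul, mul_sub, smul_mul_assoc, one_mul, mul_smul_comm, mul_one, smul_sub,
      smul_smul, ← sq]
    abel
  have hk0 : 0 ≤ k := (norm_nonneg _).trans hK
  have h1 := norm_leftInverse_sub_smul_one_le ht hP hK hk
  have h2 := norm_leftInverse_le ht hP hK hk
  rw [h]
  calc ‖(P - t • 1) * W * P + t • (W * (P - t • 1))‖
      ≤ ‖P - t • 1‖ * ‖W‖ * ‖P‖ + ‖t‖ * (‖W‖ * ‖P - t • 1‖) := by
        refine (norm_add_le _ _).trans (add_le_add ((norm_mul_le _ _).trans ?_) ?_)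
        · gcongr
          exact norm_mul_le _ _
        · rw [norm_smul]
          gcongr
          exact norm_mul_le _ _
    _ ≤ (2 * ‖t‖ ^ 2 * k) * ‖W‖ * (2 * ‖t‖) + ‖t‖ * (‖W‖ * (2 * ‖t‖ ^ 2 * k)) := by gcongr
    _ = 6 * ‖t‖ ^ 3 * k * ‖W‖ := by ring

end Resolvent

open scoped Matrix.Norms.Operator

theorem Matrix.linfty_opNorm_le_card_mul {m : Type*} [Fintype m] {X : Matrix m m ℂ} {b : ℝ}
    (hb : 0 ≤ b) (hX : ∀ i j, ‖X i j‖ ≤ b) : ‖X‖ ≤ Fintype.card m * b := by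
  lift b to NNReal using hb
  rw [linfty_opNorm_def]
  norm_cast
  refine Finset.sup_le fun i _ => ?_
  refine (Finset.sum_le_card_nsmul _ _ b fun j _ => hX i j).trans ?_
  simp

/-- Derivative of `-B⁻¹ s` for a matrix-valued function `B` and a vector-valued function `s`. -/
theorem HasDerivAt.neg_matrix_inv_mulVec {m : Type*} [Fintype m] [DecidableEq m]
    {B : ℝ → Matrix m m ℂ} {B' : Matrix m m ℂ} {s : ℝ → m → ℂ} {s' : m → ℂ} {r : ℝ}
    (hB : HasDerivAt B B' r) (hs : HasDerivAt s s' r) (hu : IsUnit (B r)) :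
    HasDerivAt (fun x => -((B x)⁻¹ *ᵥ s x))
      (((B r)⁻¹ * B' * (B r)⁻¹) *ᵥ s r - (B r)⁻¹ *ᵥ s') r := by
  obtain ⟨u, hu⟩ := hu
  have hinv : HasDerivAt (fun x => (B x)⁻¹) (-((B r)⁻¹ * B' * (B r)⁻¹)) r := by
    have h := hasFDerivAt_ringInverse (𝕜 := ℝ) u
    rw [hu] at h
    have h2 := h.comp_hasDerivAt r hB
    simp only [nonsing_inv_eq_ringInverse]
    refine h2.congr_deriv ?_
    simp [← hu]
  have hentry : ∀ i j, HasDerivAt (fun x => (B x)⁻¹ i j) ((-((B r)⁻¹ * B' * (B r)⁻¹)) i j) r :=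
    fun i j => hasDerivAt_pi.1 (hasDerivAt_pi.1 hinv i) j
  rw [hasDerivAt_pi]
  intro i
  have hsum : HasDerivAt (fun x => ∑ j, (B x)⁻¹ i j * s x j)
      (∑ j, ((-((B r)⁻¹ * B' * (B r)⁻¹)) i j * s r j + (B r)⁻¹ i j * s' j)) r :=
    HasDerivAt.fun_sum fun j _ => (hentry i j).mul (hasDerivAt_pi.1 hs j)
  refine hsum.neg.congr_deriv ?_
  simp [mulVec, dotProduct, Finset.sum_add_distrib, sub_eq_add_neg, add_comm]

theorem hasDerivAt_sin_mul (a x : ℝ) :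
    HasDerivAt (fun x => Real.sin (a * x)) (a * Real.cos (a * x)) x := by
  simpa [mul_comm] using ((hasDerivAt_id x).const_mul a).sin

theorem integral_sin_mul_sin_self {a : ℝ} (ha : a ≠ 0) (r : ℝ) :
    ∫ ρ in (0:ℝ)..r, Real.sin (a * ρ) * Real.sin (a * ρ)
      = r / 2 + -Real.sin (2 * a * r) / (4 * a) := by
  have h : ∀ x : ℝ, HasDerivAt (fun x => x / 2 + -Real.sin (2 * a * x) / (4 * a))
      (Real.sin (a * x) * Real.sin (a * x)) x := by
    intro x
    refine (((hasDerivAt_id x).div_const 2).add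
      ((hasDerivAt_sin_mul (2 * a) x).neg.div_const (4 * a))).congr_deriv ?_
    have : Real.cos (2 * a * x) = 1 - 2 * Real.sin (a * x) ^ 2 := by
      rw [mul_assoc, Real.cos_two_mul, Real.cos_sq']; ring
    rw [this]
    field_simp
    ring
  rw [intervalIntegral.integral_eq_sub_of_hasDerivAt (fun x _ => h x)
    (Continuous.intervalIntegrable (by fun_prop) _ _)]
  simp

theorem integral_sin_mul_sin {a b : ℝ} (hsub : a - b ≠ 0) (hadd : a + b ≠ 0) (r : ℝ) :
    ∫ ρ in (0:ℝ)..r, Real.sin (a * ρ) * Real.sin (b * ρ)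
      = Real.sin ((a - b) * r) / (2 * (a - b)) - Real.sin ((a + b) * r) / (2 * (a + b)) := by
  have h : ∀ x : ℝ, HasDerivAt
      (fun x => Real.sin ((a - b) * x) / (2 * (a - b)) - Real.sin ((a + b) * x) / (2 * (a + b)))
      (Real.sin (a * x) * Real.sin (b * x)) x := by
    intro x
    refine (((hasDerivAt_sin_mul (a - b) x).div_const (2 * (a - b))).sub
      ((hasDerivAt_sin_mul (a + b) x).div_const (2 * (a + b)))).congr_deriv ?_
    have h1 : Real.cos ((a - b) * x)
        = Real.cos (a * x) * Real.cos (b * x) + Real.sin (a * x) * Real.sin (b * x) := by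
      rw [sub_mul, Real.cos_sub]
    have h2 : Real.cos ((a + b) * x)
        = Real.cos (a * x) * Real.cos (b * x) - Real.sin (a * x) * Real.sin (b * x) := by
      rw [add_mul, Real.cos_add]
    rw [h1, h2]
    field_simp
    ring
  rw [intervalIntegral.integral_eq_sub_of_hasDerivAt (fun x _ => h x)
    (Continuous.intervalIntegrable (by fun_prop) _ _)]
  simp

/-- second-order asymptotic expansion of `v'(r)` as `r → ∞`. -/
theorem stmt_16 (n : ℕ) (hn : 1 ≤ n) (μ : Fin n → ℝ)
    (hμpos : ∀ i, 0 < μ i) (hμanti : StrictAnti μ)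
    (G : ℝ → Matrix (Fin n) (Fin n) ℂ)
    (hG : ∀ (r : ℝ) (i j : Fin n),
      G r i j = ((∫ ρ in (0:ℝ)..r, Real.sin (μ i * ρ) * Real.sin (μ j * ρ) : ℝ) : ℂ))
    (H : ℝ → Matrix (Fin n) (Fin n) ℂ)
    (hH : ∀ (r : ℝ) (i j : Fin n), H r i j =
      ((if i = j then -Real.sin (2 * μ i * r) / (4 * μ i)
        else Real.sin ((μ i - μ j) * r) / (2 * (μ i - μ j))
          - Real.sin ((μ i + μ j) * r) / (2 * (μ i + μ j)) : ℝ) : ℂ))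
    (a : Fin n → ℂ) (ha : ∀ j, a j ≠ 0 ∧ 0 ≤ (a j).re) (hinv : ∀ r : ℝ, 0 ≤ r → IsUnit (Matrix.diagonal a + G r))
    (s : ℝ → Fin n → ℂ) (hs : ∀ (r : ℝ) (i : Fin n), s r i = ((Real.sin (μ i * r) : ℝ) : ℂ))
    (c : ℝ → Fin n → ℂ) (hc : ∀ (r : ℝ) (i : Fin n), c r i = ((Real.cos (μ i * r) : ℝ) : ℂ))
    (v : ℝ → Fin n → ℂ) (hv : ∀ r : ℝ, v r = -((Matrix.diagonal a + G r)⁻¹ *ᵥ s r)) :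
    ∃ C > (0:ℝ), ∃ r₀ > (0:ℝ), ∀ r : ℝ, r₀ ≤ r →
      ‖(WithLp.equiv 2 (Fin n → ℂ)).symm
          (deriv v r
            + ((2 / r : ℝ) : ℂ) • (Matrix.diagonal (fun i => (μ i : ℂ)) *ᵥ c r)
            - ((4 / r ^ 2 : ℝ) : ℂ) •
                (vecMulVec (s r) (s r) *ᵥ s r
                  + (Matrix.diagonal a * Matrix.diagonal (fun i => (μ i : ℂ))) *ᵥ c r
                  + (H r * Matrix.diagonal (fun i => (μ i : ℂ))) *ᵥ c r))‖ ≤ C / r ^ 3 := by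
  have : Nonempty (Fin n) := ⟨⟨0, hn⟩⟩
  have hadd : ∀ i j, μ i + μ j ≠ 0 := fun i j => (add_pos (hμpos i) (hμpos j)).ne'
  have hsub : ∀ i j, i ≠ j → μ i - μ j ≠ 0 := fun i j hij =>
    sub_ne_zero.2 fun h => hij (hμanti.injective h)
  set M : Matrix (Fin n) (Fin n) ℂ := Matrix.diagonal (fun i => (μ i : ℂ)) with hM
  have hGH : ∀ r, G r = ((r / 2 : ℝ) : ℂ) • (1 : Matrix (Fin n) (Fin n) ℂ) + H r := by
    intro r
    ext i j
    rw [hG, Matrix.add_apply, Matrix.smul_apply, hH]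
    by_cases hij : i = j
    · subst hij
      rw [integral_sin_mul_sin_self (hμpos i).ne']
      simp
    · rw [integral_sin_mul_sin (hsub i j hij) (hadd i j)]
      simp [hij]
  have hsle : ∀ r i, ‖s r i‖ ≤ 1 := fun r i => by
    rw [hs, Complex.norm_real]
    exact Real.abs_sin_le_one _
  have hcle : ∀ r, ‖c r‖ ≤ 1 := fun r => (pi_norm_le_iff_of_nonneg zero_le_one).2 fun i => by
    rw [hc, Complex.norm_real]
    exact Real.abs_cos_le_one _
  have hsnorm : ∀ r, ‖s r‖ ≤ 1 := fun r => (pi_norm_le_iff_of_nonneg zero_le_one).2 (hsle r)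
  have hWle : ∀ r, ‖vecMulVec (s r) (s r)‖ ≤ n := by
    intro r
    refine (Matrix.linfty_opNorm_le_card_mul zero_le_one fun i j => ?_).trans (by simp)
    rw [vecMulVec_apply, norm_mul]
    exact mul_le_one₀ (hsle r i) (norm_nonneg _) (hsle r j)
  obtain ⟨b, hb0, hb⟩ : ∃ b : ℝ, 0 ≤ b ∧ ∀ r i j, ‖H r i j‖ ≤ b := by
    let f : Fin n → Fin n → ℝ := fun i j =>
      1 / |4 * μ i| + (1 / |2 * (μ i - μ j)| + 1 / |2 * (μ i + μ j)|)
    have hf : ∀ i j, 0 ≤ f i j := fun i j => by positivity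
    refine ⟨∑ i, ∑ j, f i j,
      Finset.sum_nonneg fun i _ => Finset.sum_nonneg fun j _ => hf i j, fun r i j => ?_⟩
    have hfb : f i j ≤ ∑ i, ∑ j, f i j :=
      (Finset.single_le_sum (f := fun j => f i j) (fun j _ => hf i j) (Finset.mem_univ j)).trans
        (Finset.single_le_sum (f := fun i => ∑ j, f i j)
          (fun i _ => Finset.sum_nonneg fun j _ => hf i j) (Finset.mem_univ i))
    refine le_trans ?_ hfb
    have hdiv : ∀ x y : ℝ, |Real.sin x / y| ≤ 1 / |y| := fun x y => by
      rw [abs_div]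
      gcongr
      exact Real.abs_sin_le_one _
    rw [hH, Complex.norm_real, Real.norm_eq_abs]
    split_ifs with hij
    · rw [neg_div, abs_neg]
      exact (hdiv _ _).trans (le_add_of_nonneg_right (by positivity))
    · exact ((abs_sub _ _).trans (add_le_add (hdiv _ _) (hdiv _ _))).trans
        (le_add_of_nonneg_left (by positivity))
  set K : ℝ → Matrix (Fin n) (Fin n) ℂ := fun r => Matrix.diagonal a + H r with hKdef
  set k : ℝ := ‖Matrix.diagonal a‖ + n * b with hk
  have hk0 : 0 ≤ k := by positivity
  have hKle : ∀ r, ‖K r‖ ≤ k := fun r => (norm_add_le _ _).trans <|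
    add_le_add le_rfl (by simpa using Matrix.linfty_opNorm_le_card_mul hb0 (hb r))
  have hderiv : ∀ r, 0 ≤ r → deriv v r
      = ((diagonal a + G r)⁻¹ * vecMulVec (s r) (s r) * (diagonal a + G r)⁻¹) *ᵥ s r
        - (diagonal a + G r)⁻¹ *ᵥ (M *ᵥ c r) := by
    intro r hr
    rw [funext hv]
    refine (HasDerivAt.neg_matrix_inv_mulVec (B := fun r => diagonal a + G r) (s := s) ?_ ?_
      (hinv r hr)).deriv
    · refine HasDerivAt.const_add _ ?_
      refine hasDerivAt_pi.2 fun i => hasDerivAt_pi.2 fun j => ?_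
      simp only [hG, vecMulVec_apply, hs, ← Complex.ofReal_mul]
      exact (Continuous.integral_hasStrictDerivAt
        (f := fun ρ => Real.sin (μ i * ρ) * Real.sin (μ j * ρ))
          (by fun_prop) 0 r).hasDerivAt.ofReal_comp
    · refine hasDerivAt_pi.2 fun i => ?_
      simp only [hs, hM, mulVec_diagonal, hc, ← Complex.ofReal_mul]
      exact (hasDerivAt_sin_mul (μ i) r).ofReal_comp
  let L := (PiLp.continuousLinearEquiv 2 ℂ (fun _ : Fin n => ℂ)).symm.toContinuousLinearMap
  refine ⟨‖L‖ * (48 * k * n + 16 * k ^ 2 * ‖M‖) + 1, by positivity, 4 * k + 1, by positivity,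
    fun r hr => ?_⟩
  have hr0 : 0 < r := by linarith
  set t : ℂ := ((2 / r : ℝ) : ℂ) with ht
  have ht0 : t ≠ 0 := by
    rw [ht]
    exact_mod_cast (by positivity : (2 / r : ℝ) ≠ 0)
  have htn : ‖t‖ = 2 / r := by rw [ht, Complex.norm_real, Real.norm_of_nonneg (by positivity)]
  have ht2 : ((4 / r ^ 2 : ℝ) : ℂ) = t ^ 2 := by
    rw [ht, ← Complex.ofReal_pow, div_pow]
    norm_num
  have htk : ‖t‖ * k ≤ 1 / 2 := by
    rw [htn, div_mul_eq_mul_div, div_le_iff₀ hr0]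
    linarith
  set P := (diagonal a + G r)⁻¹ with hPdef
  have hP : P * (t⁻¹ • 1 + K r) = 1 := by
    have : t⁻¹ • (1 : Matrix (Fin n) (Fin n) ℂ) + K r = diagonal a + G r := by
      rw [hGH, hKdef, ht, ← Complex.ofReal_inv, inv_div]
      exact add_left_comm _ _ _
    rw [this]
    exact nonsing_inv_mul _ ((isUnit_iff_isUnit_det _).1 (hinv r hr0.le))
  have hexp : deriv v r + t • (M *ᵥ c r)
        - ((4 / r ^ 2 : ℝ) : ℂ) • (vecMulVec (s r) (s r) *ᵥ s r + (diagonal a * M) *ᵥ c r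
            + (H r * M) *ᵥ c r)
      = (P * vecMulVec (s r) (s r) * P - t ^ 2 • vecMulVec (s r) (s r)) *ᵥ s r
        - (P - t • 1 + t ^ 2 • K r) *ᵥ (M *ᵥ c r) := by
    rw [hderiv r hr0.le, ht2, hKdef]
    simp only [← hPdef, sub_mulVec, add_mulVec, smul_mulVec, one_mulVec, smul_add, ← mulVec_mulVec]
    abel
  have hbound : ‖deriv v r + t • (M *ᵥ c r)
        - ((4 / r ^ 2 : ℝ) : ℂ) • (vecMulVec (s r) (s r) *ᵥ s r + (diagonal a * M) *ᵥ c r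
            + (H r * M) *ᵥ c r)‖ ≤ (48 * k * n + 16 * k ^ 2 * ‖M‖) / r ^ 3 := by
    rw [hexp]
    have hMc : ‖M *ᵥ c r‖ ≤ ‖M‖ * 1 :=
      (linfty_opNorm_mulVec _ _).trans (by gcongr; exact hcle r)
    have h1 : ‖(P * vecMulVec (s r) (s r) * P - t ^ 2 • vecMulVec (s r) (s r)) *ᵥ s r‖
        ≤ 6 * ‖t‖ ^ 3 * k * n * 1 := by
      refine (linfty_opNorm_mulVec _ _).trans ?_
      refine mul_le_mul ?_ (hsnorm r) (norm_nonneg _) (by positivity)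
      exact (norm_leftInverse_mul_mul_sub_le ht0 hP (hKle r) htk _).trans
        (by gcongr; exact hWle r)
    have h2 : ‖(P - t • 1 + t ^ 2 • K r) *ᵥ (M *ᵥ c r)‖ ≤ 2 * ‖t‖ ^ 3 * k ^ 2 * (‖M‖ * 1) :=
      (linfty_opNorm_mulVec _ _).trans (mul_le_mul
        (norm_leftInverse_sub_add_le ht0 hP (hKle r) htk) hMc (norm_nonneg _) (by positivity))
    refine ((norm_sub_le _ _).trans (add_le_add h1 h2)).trans_eq ?_
    rw [htn]
    field_simp
    ring
  refine (L.le_opNorm _).trans ?_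
  calc ‖L‖ * _ ≤ ‖L‖ * ((48 * k * n + 16 * k ^ 2 * ‖M‖) / r ^ 3) := by gcongr
    _ = ‖L‖ * (48 * k * n + 16 * k ^ 2 * ‖M‖) / r ^ 3 := by ring
    _ ≤ _ := by gcongr; linarith
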